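/- Let f : {0,1}^n × {0,1}^n → {0,1} and let μ be a product distribution on {0,1}^n × {0,1}^n. Then there exists a universal constant C > 0 such that CC^μ_{0.49}(f) ≤ C · (log srec^μ_{1/n²,1/n²}(f))² · log n (for n ≥ 2 and srec^μ_{1/n²,1/n²}(f) ≥ 2). -/

import Mathlib

open scoped BigOperators
open scoped Classical

noncomputable section

/-! ## Probability distributions on finite types -/

/-- `p` is a probability distribution on the finite type `α`. -/
def IsDist {α : Type} [Fintype α] (p : α → ℝ) : Prop :=
  (∀ a, 0 ≤ p a) ∧ ∑ a, p a = 1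

/-- `μ` (in curried form) is a probability distribution on `X × Y`. -/
def IsDist2 {X Y : Type} [Fintype X] [Fintype Y] (μ : X → Y → ℝ) : Prop :=
  (∀ x y, 0 ≤ μ x y) ∧ ∑ x, ∑ y, μ x y = 1

/-! ## Deterministic communication protocols -/

/-- A deterministic two-party communication protocol: a finite binary tree where each
internal node is owned by Alice (`nodeA`) or Bob (`nodeB`) and is labeled by a function
of that player's input choosing one of the two children; leaves carry Boolean outputs. -/
inductive Protocol (X Y : Type) : Type
  | leaf : Bool → Protocol X Y
  | nodeA : (X → Bool) → Protocol X Y → Protocol X Y → Protocol X Y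
  | nodeB : (Y → Bool) → Protocol X Y → Protocol X Y → Protocol X Y

namespace Protocol

def eval {X Y : Type} : Protocol X Y → X → Y → Bool
  | leaf b, _, _ => b
  | nodeA g t0 t1, x, y => if g x then eval t1 x y else eval t0 x y
  | nodeB g t0 t1, x, y => if g y then eval t1 x y else eval t0 x y

/-- Depth (number of bits communicated in the worst case). -/
def depth {X Y : Type} : Protocol X Y → ℕ
  | leaf _ => 0
  | nodeA _ t0 t1 => max (depth t0) (depth t1) + 1
  | nodeB _ t0 t1 => max (depth t0) (depth t1) + 1

/-- Number of leaves. -/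
def leavesCount {X Y : Type} : Protocol X Y → ℕ
  | leaf _ => 1
  | nodeA _ t0 t1 => leavesCount t0 + leavesCount t1
  | nodeB _ t0 t1 => leavesCount t0 + leavesCount t1

/-- The sequence of bits communicated on input `(x, y)`. -/
def transcript {X Y : Type} : Protocol X Y → X → Y → List Bool
  | leaf _, _, _ => []
  | nodeA g t0 t1, x, y =>
      if g x then true :: transcript t1 x y else false :: transcript t0 x y
  | nodeB g t0 t1, x, y =>
      if g y then true :: transcript t1 x y else false :: transcript t0 x y

end Protocol

/-- Error of a deterministic protocol w.r.t. input distribution `μ`. -/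
def commErr {X Y : Type} [Fintype X] [Fintype Y]
    (μ : X → Y → ℝ) (f : X → Y → Bool) (P : Protocol X Y) : ℝ :=
  ∑ x, ∑ y, if P.eval x y ≠ f x y then μ x y else 0

/-- Distributional communication complexity `CC^μ_ε(f)`: the minimum depth of a
deterministic protocol erring with probability at most `ε` under `μ`. -/
def CCdist {X Y : Type} [Fintype X] [Fintype Y]
    (μ : X → Y → ℝ) (f : X → Y → Bool) (ε : ℝ) : ℕ :=
  sInf {d : ℕ | ∃ P : Protocol X Y, P.depth ≤ d ∧ commErr μ f P ≤ ε}

/-- The advantage `adv_μ(Π)` of a protocol w.r.t. a (not necessarily normalized) measure. -/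
def protAdv {X Y : Type} [Fintype X] [Fintype Y]
    (μ : X → Y → ℝ) (f : X → Y → Bool) (P : Protocol X Y) : ℝ :=
  ∑ x, ∑ y, if P.eval x y = f x y then μ x y else - μ x y

/-! ## Information complexity -/

/-- Probability of an event under a finite (possibly unnormalized) distribution. -/
def prOf {Ω : Type} [Fintype Ω] (p : Ω → ℝ) (q : Ω → Prop) : ℝ :=
  ∑ ω, if q ω then p ω else 0

/-- Conditional mutual information `I(A ; B | C)` (in bits) of random variables `A`, `B`, `C`
defined on a finite probability space `(Ω, p)`. -/
def condMI {Ω α β γ : Type} [Fintype Ω] (p : Ω → ℝ)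
    (A : Ω → α) (B : Ω → β) (C : Ω → γ) : ℝ :=
  ∑ ω, p ω * Real.logb 2 (
    (prOf p (fun ω' => A ω' = A ω ∧ B ω' = B ω ∧ C ω' = C ω) *
      prOf p (fun ω' => C ω' = C ω)) /
    (prOf p (fun ω' => A ω' = A ω ∧ C ω' = C ω) *
      prOf p (fun ω' => B ω' = B ω ∧ C ω' = C ω)))

/-- Internal information cost `IC^μ(Π) = I(X;T|Y) + I(Y;T|X)` of the public-coin protocol
given by a distribution `ρ` on `Fin m` together with deterministic protocols `P r`; the
transcript `T` consists of the public randomness together with the communicated bits. -/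
def infoCost {X Y : Type} [Fintype X] [Fintype Y] (μ : X → Y → ℝ)
    {m : ℕ} (ρ : Fin m → ℝ) (P : Fin m → Protocol X Y) : ℝ :=
  condMI (fun ω : X × Y × Fin m => μ ω.1 ω.2.1 * ρ ω.2.2)
      (fun ω => ω.1)
      (fun ω => (ω.2.2, (P ω.2.2).transcript ω.1 ω.2.1))
      (fun ω => ω.2.1)
  + condMI (fun ω : X × Y × Fin m => μ ω.1 ω.2.1 * ρ ω.2.2)
      (fun ω => ω.2.1)
      (fun ω => (ω.2.2, (P ω.2.2).transcript ω.1 ω.2.1))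
      (fun ω => ω.1)

/-- Error of a public-coin protocol under input distribution `μ` and coin distribution `ρ`. -/
def randErr {X Y : Type} [Fintype X] [Fintype Y] (μ : X → Y → ℝ) (f : X → Y → Bool)
    {m : ℕ} (ρ : Fin m → ℝ) (P : Fin m → Protocol X Y) : ℝ :=
  ∑ x, ∑ y, ∑ r, if (P r).eval x y ≠ f x y then μ x y * ρ r else 0

/-- `IC^μ_ε(f)`: infimum of the information cost over all public-coin protocols computing
`f` with error at most `ε` under `μ`. -/
def ICmu {X Y : Type} [Fintype X] [Fintype Y]
    (μ : X → Y → ℝ) (f : X → Y → Bool) (ε : ℝ) : ℝ :=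
  sInf { c : ℝ | ∃ (m : ℕ) (ρ : Fin m → ℝ) (P : Fin m → Protocol X Y),
    IsDist ρ ∧ randErr μ f ρ P ≤ ε ∧ c = infoCost μ ρ P }

/-- `IC_ε(f) = max_μ IC^μ_ε(f)`. -/
def IC {X Y : Type} [Fintype X] [Fintype Y] (f : X → Y → Bool) (ε : ℝ) : ℝ :=
  sSup { c : ℝ | ∃ μ : X → Y → ℝ, IsDist2 μ ∧ c = ICmu μ f ε }

/-! ## Rectangles, smooth rectangle bound and partition bound -/

/-- Total weight of rectangles containing `(x, y)`: a combinatorial rectangle is a pair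
`R = (S, T)` of finite sets, and `(x,y) ∈ R` iff `x ∈ S ∧ y ∈ T`. -/
def rcov {X Y : Type} [Fintype X] [Fintype Y]
    (w : Finset X × Finset Y → ℝ) (x : X) (y : Y) : ℝ :=
  ∑ R : Finset X × Finset Y, if x ∈ R.1 ∧ y ∈ R.2 then w R else 0

/-- `μ(R)` for a rectangle `R`. -/
def rMass {X Y : Type} [Fintype X] [Fintype Y]
    (μ : X → Y → ℝ) (R : Finset X × Finset Y) : ℝ :=
  ∑ x, ∑ y, if x ∈ R.1 ∧ y ∈ R.2 then μ x y else 0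

/-- `μ_z(R) = μ(R ∩ f⁻¹(z))` for a rectangle `R`. -/
def rMassZ {X Y : Type} [Fintype X] [Fintype Y]
    (μ : X → Y → ℝ) (f : X → Y → Bool) (z : Bool) (R : Finset X × Finset Y) : ℝ :=
  ∑ x, ∑ y, if (x ∈ R.1 ∧ y ∈ R.2) ∧ f x y = z then μ x y else 0

/-- `μ_z = μ(f⁻¹(z))`. -/
def totalZ {X Y : Type} [Fintype X] [Fintype Y]
    (μ : X → Y → ℝ) (f : X → Y → Bool) (z : Bool) : ℝ :=
  ∑ x, ∑ y, if f x y = z then μ x y else 0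

/-- `|μ|`, the total mass of a measure. -/
def totalMass {X Y : Type} [Fintype X] [Fintype Y] (μ : X → Y → ℝ) : ℝ :=
  ∑ x, ∑ y, μ x y

/-- Restriction of a measure to a rectangle. -/
def restrictRect {X Y : Type} (μ : X → Y → ℝ) (R : Finset X × Finset Y) : X → Y → ℝ :=
  fun x y => if x ∈ R.1 ∧ y ∈ R.2 then μ x y else 0

/-- Distributional smooth rectangle bound `srec^{z,μ}_{ε,δ}(f)` (LP optimal value). -/
def srecZmu {X Y : Type} [Fintype X] [Fintype Y]
    (μ : X → Y → ℝ) (f : X → Y → Bool) (z : Bool) (ε δ : ℝ) : ℝ :=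
  sInf { v : ℝ | ∃ w : Finset X × Finset Y → ℝ,
    (∀ R, 0 ≤ w R) ∧
    ((1 - ε) * totalZ μ f z ≤ ∑ x, ∑ y, if f x y = z then μ x y * rcov w x y else 0) ∧
    (∀ x y, f x y ≠ z → rcov w x y ≤ δ) ∧
    (∀ x y, rcov w x y ≤ 1) ∧
    v = ∑ R : Finset X × Finset Y, w R }

/-- `srec^μ_{ε,δ}(f) = max{srec^{0,μ}_{ε,δ}(f), srec^{1,μ}_{ε,δ}(f)}`. -/
def srecMu {X Y : Type} [Fintype X] [Fintype Y]
    (μ : X → Y → ℝ) (f : X → Y → Bool) (ε δ : ℝ) : ℝ :=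
  max (srecZmu μ f false ε δ) (srecZmu μ f true ε δ)

/-- Smooth rectangle bound `srec^z_{ε,δ}(f)` (LP optimal value). -/
def srecZ {X Y : Type} [Fintype X] [Fintype Y]
    (f : X → Y → Bool) (z : Bool) (ε δ : ℝ) : ℝ :=
  sInf { v : ℝ | ∃ w : Finset X × Finset Y → ℝ,
    (∀ R, 0 ≤ w R) ∧
    (∀ x y, f x y = z → 1 - ε ≤ rcov w x y) ∧
    (∀ x y, f x y ≠ z → rcov w x y ≤ δ) ∧
    (∀ x y, rcov w x y ≤ 1) ∧
    v = ∑ R : Finset X × Finset Y, w R }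

/-- `srec_{ε,δ}(f) = max{srec^0_{ε,δ}(f), srec^1_{ε,δ}(f)}`. -/
def srec {X Y : Type} [Fintype X] [Fintype Y] (f : X → Y → Bool) (ε δ : ℝ) : ℝ :=
  max (srecZ f false ε δ) (srecZ f true ε δ)

/-- Partition bound `prt_ε(f)` (LP optimal value). -/
def prt {X Y : Type} [Fintype X] [Fintype Y] (f : X → Y → Bool) (ε : ℝ) : ℝ :=
  sInf { v : ℝ | ∃ w : Bool → Finset X × Finset Y → ℝ,
    (∀ z R, 0 ≤ w z R) ∧
    (∀ x y, 1 - ε ≤ rcov (w (f x y)) x y) ∧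
    (∀ x y, rcov (w false) x y + rcov (w true) x y = 1) ∧
    v = ∑ R : Finset X × Finset Y, (w false R + w true R) }

/-! ### General-output versions -/

/-- Smooth rectangle bound `srec^z_{ε,δ}(f)` for general output alphabet. -/
def srecZgen {X Y Z : Type} [Fintype X] [Fintype Y]
    (f : X → Y → Z) (z : Z) (ε δ : ℝ) : ℝ :=
  sInf { v : ℝ | ∃ w : Finset X × Finset Y → ℝ,
    (∀ R, 0 ≤ w R) ∧
    (∀ x y, f x y = z → 1 - ε ≤ rcov w x y) ∧
    (∀ x y, f x y ≠ z → rcov w x y ≤ δ) ∧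
    (∀ x y, rcov w x y ≤ 1) ∧
    v = ∑ R : Finset X × Finset Y, w R }

/-- `srec_{ε,δ}(f) = max_{z ∈ Z} srec^z_{ε,δ}(f)`. -/
def srecGen {X Y Z : Type} [Fintype X] [Fintype Y] [Fintype Z]
    (f : X → Y → Z) (ε δ : ℝ) : ℝ :=
  sSup (Set.range fun z : Z => srecZgen f z ε δ)

/-- Distributional smooth rectangle bound for general output alphabet. -/
def srecZmuGen {X Y Z : Type} [Fintype X] [Fintype Y]
    (μ : X → Y → ℝ) (f : X → Y → Z) (z : Z) (ε δ : ℝ) : ℝ :=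
  sInf { v : ℝ | ∃ w : Finset X × Finset Y → ℝ,
    (∀ R, 0 ≤ w R) ∧
    ((1 - ε) * (∑ x, ∑ y, if f x y = z then μ x y else 0) ≤
      ∑ x, ∑ y, if f x y = z then μ x y * rcov w x y else 0) ∧
    (∀ x y, f x y ≠ z → rcov w x y ≤ δ) ∧
    (∀ x y, rcov w x y ≤ 1) ∧
    v = ∑ R : Finset X × Finset Y, w R }

/-- `srec^μ_{ε,δ}(f) = max_{z ∈ Z} srec^{z,μ}_{ε,δ}(f)`. -/
def srecMuGen {X Y Z : Type} [Fintype X] [Fintype Y] [Fintype Z]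
    (μ : X → Y → ℝ) (f : X → Y → Z) (ε δ : ℝ) : ℝ :=
  sSup (Set.range fun z : Z => srecZmuGen μ f z ε δ)

/-- Partition bound for general output alphabet. -/
def prtGen {X Y Z : Type} [Fintype X] [Fintype Y] [Fintype Z]
    (f : X → Y → Z) (ε : ℝ) : ℝ :=
  sInf { v : ℝ | ∃ w : Z → Finset X × Finset Y → ℝ,
    (∀ z R, 0 ≤ w z R) ∧
    (∀ x y, 1 - ε ≤ rcov (w (f x y)) x y) ∧
    (∀ x y, (∑ z : Z, rcov (w z) x y) = 1) ∧
    v = ∑ z : Z, ∑ R : Finset X × Finset Y, w z R }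

/-! ## Decision trees, subcubes and the query partition bound -/

/-- Deterministic decision trees on `n` input bits. -/
inductive DTree (n : ℕ) : Type
  | leaf : Bool → DTree n
  | node : Fin n → DTree n → DTree n → DTree n

def DTree.eval {n : ℕ} : DTree n → (Fin n → Bool) → Bool
  | .leaf b, _ => b
  | .node i t0 t1, x => if x i then DTree.eval t1 x else DTree.eval t0 x

def DTree.depth {n : ℕ} : DTree n → ℕ
  | .leaf _ => 0
  | .node _ t0 t1 => max (DTree.depth t0) (DTree.depth t1) + 1

/-- Error of a decision tree w.r.t. the input distribution `μ`. -/
def qErr {n : ℕ} (μ : (Fin n → Bool) → ℝ) (g : (Fin n → Bool) → Bool) (T : DTree n) : ℝ :=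
  ∑ x, if T.eval x ≠ g x then μ x else 0

/-- Distributional query complexity `QC^μ_ε(g)`: minimum depth of a deterministic decision
tree erring with probability at most `ε` under `μ`. -/
def QCdist {n : ℕ} (μ : (Fin n → Bool) → ℝ) (g : (Fin n → Bool) → Bool) (ε : ℝ) : ℕ :=
  sInf {d : ℕ | ∃ T : DTree n, T.depth ≤ d ∧ qErr μ g T ≤ ε}

/-- A subcube of `{0,1}ⁿ`, given by its support pattern `s ∈ {0,1,⋆}ⁿ`. -/
abbrev Subcube (n : ℕ) := Fin n → Option Bool

/-- Membership in a subcube. -/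
def memCube {n : ℕ} (A : Subcube n) (x : Fin n → Bool) : Prop :=
  ∀ i, ∀ b, A i = some b → x i = b

/-- Size of (the support of) a subcube. -/
def cubeSize {n : ℕ} (A : Subcube n) : ℕ :=
  (Finset.univ.filter fun i => (A i).isSome).card

/-- Total weight of subcubes containing `x`. -/
def cubeCov {n : ℕ} (w : Subcube n → ℝ) (x : Fin n → Bool) : ℝ :=
  ∑ A : Subcube n, if memCube A x then w A else 0

/-- Query partition bound `qprt_ε(g)` (LP optimal value). -/
def qprt {n : ℕ} (g : (Fin n → Bool) → Bool) (ε : ℝ) : ℝ :=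
  sInf { v : ℝ | ∃ w : Bool → Subcube n → ℝ,
    (∀ z A, 0 ≤ w z A) ∧
    (∀ x, 1 - ε ≤ cubeCov (w (g x)) x) ∧
    (∀ x, cubeCov (w false) x + cubeCov (w true) x = 1) ∧
    v = ∑ A : Subcube n, (w false A + w true A) * 2 ^ cubeSize A }

/-- The bit-wise product distribution on `{0,1}ⁿ` with `p_i(1) = p i`, `p_i(0) = 1 - p i`. -/
def bitProd {n : ℕ} (p : Fin n → ℝ) : (Fin n → Bool) → ℝ :=
  fun x => ∏ i, if x i then p i else 1 - p i

/-- `μ(A)` for a subcube (or any set given by a membership predicate). -/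
def cubeMass {n : ℕ} (μ : (Fin n → Bool) → ℝ) (A : Subcube n) : ℝ :=
  ∑ x, if memCube A x then μ x else 0

/-- `μ_z(A) = μ(A ∩ g⁻¹(z))` for a subcube `A`. -/
def cubeMassZ {n : ℕ} (μ : (Fin n → Bool) → ℝ) (g : (Fin n → Bool) → Bool)
    (z : Bool) (A : Subcube n) : ℝ :=
  ∑ x, if memCube A x ∧ g x = z then μ x else 0

/-- `μ_z = μ(g⁻¹(z))`. -/
def qTotalZ {n : ℕ} (μ : (Fin n → Bool) → ℝ) (g : (Fin n → Bool) → Bool) (z : Bool) : ℝ :=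
  ∑ x, if g x = z then μ x else 0

/-- Mass of a finite set of pairs under the product measure `μA ⊗ μB`. -/
def pairMass {X Y : Type} (μA : X → ℝ) (μB : Y → ℝ) (A : Finset (X × Y)) : ℝ :=
  ∑ q ∈ A, μA q.1 * μB q.2

end

/-!
Let `K` be the smooth rectangle bound, and let `w`, `v` be nearly optimal coverings of the `1`- and
of the `0`-inputs. Inside the current rectangle `Q`, either almost all inputs are `0`-inputs, and we
stop, or by averaging some rectangle of `w` meets `Q` in an `S × T` that carries an `Ω(1 / K)`
fraction of `Q` and is almost free of `0`-inputs, so that `v` covers little of it. For a product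
measure, a rectangle of `v` that meets `S × T` in a small part only has a small trace on one of the
two sides, hence `v` splits into two parts, one nearly useless on the strip `S × B` and the other on
`A × T`. Dropping the heavier part halves the weight of `v` on one of the strips, and on the rest of
`Q` the mass has decreased by a factor `1 - Ω(1 / K)`. After `O(K log n)` splits per halving and
`O(log K)` halvings `v` has weight below `1 / 2` and cannot cover many `0`-inputs. The resulting
protocol is deep but has only `(K n) ^ O(log K)` leaves, so balancing gives the bound when `n` is
large compared with `log K`; otherwise Alice just sends her input.
-/

namespace Protocol

variable {X Y : Type}

lemma depth_lt_leavesCount (P : Protocol X Y) : P.depth < P.leavesCount := by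
  induction P with
  | leaf _ => simp only [depth, leavesCount, zero_lt_one]
  | nodeA g P₀ P₁ ih₀ ih₁ => simp only [depth, leavesCount]; omega
  | nodeB g P₀ P₁ ih₀ ih₁ => simp only [depth, leavesCount]; omega

/-- `Q` is a subtree of `P`, reached exactly on the rectangle `S × T`, and `R` is `P` with this
subtree pruned to a leaf. -/
lemma exists_subtree {t : ℕ} (P : Protocol X Y) (ht : 0 < t) (hP : t < P.leavesCount) :
    ∃ (S : X → Bool) (T : Y → Bool) (Q R : Protocol X Y),
      (∀ x y, P.eval x y = if S x ∧ T y then Q.eval x y else R.eval x y) ∧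
      t < Q.leavesCount ∧ Q.leavesCount ≤ 2 * t ∧
      R.leavesCount + Q.leavesCount ≤ P.leavesCount + 1 := by
  induction P with
  | leaf _ => simp only [leavesCount] at hP; omega
  | nodeA g P₀ P₁ ih₀ ih₁ =>
    simp only [leavesCount] at hP
    by_cases h₀ : t < P₀.leavesCount
    · obtain ⟨S, T, Q, R, hPQR, hQ, hQ', hR⟩ := ih₀ h₀
      refine ⟨fun x => !g x && S x, T, Q, .nodeA g R P₁, fun x y => ?_, hQ, hQ', ?_⟩
      · cases hg : g x <;> simp [eval, hg, hPQR]
      · simp only [leavesCount]; omega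
    by_cases h₁ : t < P₁.leavesCount
    · obtain ⟨S, T, Q, R, hPQR, hQ, hQ', hR⟩ := ih₁ h₁
      refine ⟨fun x => g x && S x, T, Q, .nodeA g P₀ R, fun x y => ?_, hQ, hQ', ?_⟩
      · cases hg : g x <;> simp [eval, hg, hPQR]
      · simp only [leavesCount]; omega
    exact ⟨fun _ => true, fun _ => true, .nodeA g P₀ P₁, .leaf false, by simp, hP,
      by simp only [leavesCount]; omega, (add_comm _ _).le⟩
  | nodeB g P₀ P₁ ih₀ ih₁ =>
    simp only [leavesCount] at hP
    by_cases h₀ : t < P₀.leavesCount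
    · obtain ⟨S, T, Q, R, hPQR, hQ, hQ', hR⟩ := ih₀ h₀
      refine ⟨S, fun y => !g y && T y, Q, .nodeB g R P₁, fun x y => ?_, hQ, hQ', ?_⟩
      · cases hg : g y <;> simp [eval, hg, hPQR]
      · simp only [leavesCount]; omega
    by_cases h₁ : t < P₁.leavesCount
    · obtain ⟨S, T, Q, R, hPQR, hQ, hQ', hR⟩ := ih₁ h₁
      refine ⟨S, fun y => g y && T y, Q, .nodeB g P₀ R, fun x y => ?_, hQ, hQ', ?_⟩
      · cases hg : g y <;> simp [eval, hg, hPQR]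
      · simp only [leavesCount]; omega
    exact ⟨fun _ => true, fun _ => true, .nodeB g P₀ P₁, .leaf false, by simp, hP,
      by simp only [leavesCount]; omega, (add_comm _ _).le⟩

lemma exists_depth_le_of_leavesCount_mul_le {j : ℕ} (P : Protocol X Y)
    (hP : P.leavesCount * 3 ^ j ≤ 8 * 4 ^ j) :
    ∃ P' : Protocol X Y, P'.depth ≤ 7 + 2 * j ∧ P'.eval = P.eval := by
  induction j generalizing P with
  | zero =>
    have := P.depth_lt_leavesCount
    exact ⟨P, by omega, rfl⟩
  | succ j ih =>
    by_cases hsmall : P.leavesCount < 8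
    · have := P.depth_lt_leavesCount
      exact ⟨P, by omega, rfl⟩
    obtain ⟨S, T, Q, R, hPQR, hQ, hQ', hR⟩ :=
      P.exists_subtree (t := P.leavesCount / 3) (by omega) (by omega)
    have shrink : ∀ N : ℕ, 4 * N ≤ 3 * P.leavesCount → N * 3 ^ j ≤ 8 * 4 ^ j := by
      intro N hN
      have := Nat.mul_le_mul_right (3 ^ j) hN
      rw [pow_succ, pow_succ] at hP
      linarith
    obtain ⟨Q', hQd, hQe⟩ := ih Q (shrink _ (by omega))
    obtain ⟨R', hRd, hRe⟩ := ih R (shrink _ (by omega))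
    refine ⟨.nodeA S R' (.nodeB T R' Q'), by simp only [depth]; omega, funext₂ fun x y => ?_⟩
    rw [hPQR]
    cases hS : S x <;> cases hT : T y <;> simp [eval, hS, hT, hQe, hRe]

lemma exists_depth_le_of_leavesCount_le {L : ℕ} (P : Protocol X Y) (hP : P.leavesCount ≤ 2 ^ L) :
    ∃ P' : Protocol X Y, P'.depth ≤ 7 + 6 * L ∧ P'.eval = P.eval := by
  obtain ⟨P', hd, he⟩ := P.exists_depth_le_of_leavesCount_mul_le (j := 3 * L) <| by
    calc P.leavesCount * 3 ^ (3 * L) ≤ 2 ^ L * 3 ^ (3 * L) := Nat.mul_le_mul_right _ hP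
      _ = 54 ^ L := by rw [pow_mul, ← mul_pow]; norm_num
      _ ≤ 64 ^ L := Nat.pow_le_pow_left (by norm_num) L
      _ = 4 ^ (3 * L) := by rw [pow_mul]; norm_num
      _ ≤ 8 * 4 ^ (3 * L) := Nat.le_mul_of_pos_left _ (by norm_num)
  exact ⟨P', by omega, he⟩

/-- Alice identifies her input within `s` by bisection, and Bob answers. -/
lemma exists_depth_le_of_card_le {k : ℕ} (f : X → Y → Bool) {s : Finset X} (hs : s.card ≤ 2 ^ k) :
    ∃ P : Protocol X Y, P.depth ≤ k + 1 ∧ ∀ x ∈ s, ∀ y, P.eval x y = f x y := by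
  induction k generalizing s with
  | zero =>
    rcases s.eq_empty_or_nonempty with rfl | ⟨a, ha⟩
    · exact ⟨.leaf false, Nat.zero_le _, fun x hx => absurd hx (Finset.notMem_empty x)⟩
    · refine ⟨.nodeB (f a) (.leaf false) (.leaf true), le_rfl, fun x hx y => ?_⟩
      obtain rfl := Finset.card_le_one.1 hs x hx a ha
      cases h : f x y <;> simp [eval, h]
  | succ k ih =>
    obtain ⟨t, hts, ht⟩ := Finset.exists_subset_card_eq (Nat.div_le_self s.card 2)
    have hst := Finset.card_sdiff_add_card_eq_card hts
    rw [pow_succ] at hs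
    obtain ⟨P₁, hd₁, he₁⟩ := ih (s := t) (by omega)
    obtain ⟨P₀, hd₀, he₀⟩ := ih (s := s \ t) (by omega)
    refine ⟨.nodeA (fun x => decide (x ∈ t)) P₀ P₁, by simp only [depth]; omega, fun x hx y => ?_⟩
    by_cases hxt : x ∈ t
    · simp [eval, hxt, he₁ x hxt]
    · simp [eval, hxt, he₀ x (Finset.mem_sdiff.2 ⟨hx, hxt⟩)]

end Protocol

noncomputable section

variable {X Y : Type}

/-- `IsSplit Q Q₁ Q₂`: one bit of Alice or of Bob splits the rectangle `Q` into `Q₁` and `Q₂`. -/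
inductive IsSplit :
    Finset X × Finset Y → Finset X × Finset Y → Finset X × Finset Y → Prop
  | alice {S A : Finset X} (B : Finset Y) (hS : S ⊆ A) : IsSplit (A, B) (S, B) (A \ S, B)
  | bob (A : Finset X) {T B : Finset Y} (hT : T ⊆ B) : IsSplit (A, B) (A, T) (A, B \ T)

/-- `μ` is a product of nonnegative measures on `X` and on `Y`, not necessarily normalized. -/
def IsProductMeasure (μ : X → Y → ℝ) : Prop :=
  ∃ (μA : X → ℝ) (μB : Y → ℝ), (∀ x, 0 ≤ μA x) ∧ (∀ y, 0 ≤ μB y) ∧ μ = fun x y => μA x * μB y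

lemma IsProductMeasure.nonneg {μ : X → Y → ℝ} (hμ : IsProductMeasure μ) (x : X) (y : Y) :
    0 ≤ μ x y := by
  obtain ⟨μA, μB, hA, hB, rfl⟩ := hμ
  exact mul_nonneg (hA x) (hB y)

/-- The restriction of `μ` to `f⁻¹(z)`, whose mass on rectangles is `rMassZ μ f z`. -/
def fiberMeasure (μ : X → Y → ℝ) (f : X → Y → Bool) (z : Bool) : X → Y → ℝ :=
  fun x y => if f x y = z then μ x y else 0

lemma fiberMeasure_nonneg {μ : X → Y → ℝ} (hμ : ∀ x y, 0 ≤ μ x y) (f : X → Y → Bool) (z : Bool)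
    (x : X) (y : Y) : 0 ≤ fiberMeasure μ f z x y :=
  ite_nonneg (hμ x y) le_rfl

lemma fiberMeasure_le {μ : X → Y → ℝ} (hμ : ∀ x y, 0 ≤ μ x y) (f : X → Y → Bool) (z : Bool)
    (x : X) (y : Y) : fiberMeasure μ f z x y ≤ μ x y :=
  ite_le_sup _ _ _ |>.trans (sup_le le_rfl (hμ x y))

lemma fiberMeasure_true_add_false (μ : X → Y → ℝ) (f : X → Y → Bool) (x : X) (y : Y) :
    fiberMeasure μ f true x y + fiberMeasure μ f false x y = μ x y := by
  cases h : f x y <;> simp [fiberMeasure, h]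

variable [Fintype X] [Fintype Y] {μ g h : X → Y → ℝ} {f : X → Y → Bool} {z : Bool}
  {u v w : Finset X × Finset Y → ℝ} {Q Q₁ Q₂ : Finset X × Finset Y}

/-! ### Masses of rectangles -/

lemma rMass_eq_sum (g : X → Y → ℝ) (Q : Finset X × Finset Y) :
    rMass g Q = ∑ x ∈ Q.1, ∑ y ∈ Q.2, g x y := by
  simp [rMass, ite_and]

lemma rMass_top (g : X → Y → ℝ) : rMass g ⊤ = ∑ x, ∑ y, g x y :=
  rMass_eq_sum g ⊤

lemma rMass_le_rMass (hgh : ∀ x y, g x y ≤ h x y) (Q : Finset X × Finset Y) :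
    rMass g Q ≤ rMass h Q := by
  simp only [rMass_eq_sum]
  gcongr
  exact hgh _ _

lemma rMass_nonneg (hg : ∀ x y, 0 ≤ g x y) (Q : Finset X × Finset Y) : 0 ≤ rMass g Q := by
  rw [rMass_eq_sum]
  exact Finset.sum_nonneg fun x _ => Finset.sum_nonneg fun y _ => hg x y

lemma rMass_add (g h : X → Y → ℝ) (Q : Finset X × Finset Y) :
    rMass (fun x y => g x y + h x y) Q = rMass g Q + rMass h Q := by
  simp only [rMass_eq_sum, Finset.sum_add_distrib]

lemma rMass_const_mul (c : ℝ) (g : X → Y → ℝ) (Q : Finset X × Finset Y) :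
    rMass (fun x y => c * g x y) Q = c * rMass g Q := by
  simp only [rMass_eq_sum, Finset.mul_sum]

lemma IsSplit.rMass_eq_add (hQ : IsSplit Q Q₁ Q₂) (g : X → Y → ℝ) :
    rMass g Q = rMass g Q₁ + rMass g Q₂ := by
  simp only [rMass_eq_sum]
  cases hQ with
  | alice B hS => exact (Finset.sum_sdiff hS).symm.trans (add_comm _ _)
  | bob A hT =>
    rw [← Finset.sum_add_distrib]
    exact Finset.sum_congr rfl fun x _ => (Finset.sum_sdiff hT).symm.trans (add_comm _ _)

lemma rMass_mono (hg : ∀ x y, 0 ≤ g x y) (hQ : Q₁ ≤ Q₂) : rMass g Q₁ ≤ rMass g Q₂ := by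
  simp only [rMass_eq_sum]
  calc ∑ x ∈ Q₁.1, ∑ y ∈ Q₁.2, g x y ≤ ∑ x ∈ Q₁.1, ∑ y ∈ Q₂.2, g x y :=
        Finset.sum_le_sum fun x _ =>
          Finset.sum_le_sum_of_subset_of_nonneg hQ.2 fun y _ _ => hg x y
    _ ≤ ∑ x ∈ Q₂.1, ∑ y ∈ Q₂.2, g x y :=
        Finset.sum_le_sum_of_subset_of_nonneg hQ.1 fun x _ _ =>
          Finset.sum_nonneg fun y _ => hg x y

lemma rMass_mul (μA : X → ℝ) (μB : Y → ℝ) (Q : Finset X × Finset Y) :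
    rMass (fun x y => μA x * μB y) Q = (∑ x ∈ Q.1, μA x) * ∑ y ∈ Q.2, μB y := by
  rw [rMass_eq_sum, Finset.sum_mul_sum]

lemma rMassZ_eq_rMass (μ : X → Y → ℝ) (f : X → Y → Bool) (z : Bool) (Q : Finset X × Finset Y) :
    rMassZ μ f z Q = rMass (fiberMeasure μ f z) Q := by
  simp only [rMassZ, rMass, fiberMeasure, ite_and]

lemma totalZ_eq_rMassZ_top (μ : X → Y → ℝ) (f : X → Y → Bool) (z : Bool) :
    totalZ μ f z = rMassZ μ f z ⊤ := by
  rw [rMassZ_eq_rMass, rMass_top]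
  rfl

lemma rMassZ_nonneg (hμ : ∀ x y, 0 ≤ μ x y) (f : X → Y → Bool) (z : Bool)
    (Q : Finset X × Finset Y) : 0 ≤ rMassZ μ f z Q := by
  rw [rMassZ_eq_rMass]
  exact rMass_nonneg (fiberMeasure_nonneg hμ f z) Q

lemma rMassZ_le_rMass (hμ : ∀ x y, 0 ≤ μ x y) (f : X → Y → Bool) (z : Bool)
    (Q : Finset X × Finset Y) : rMassZ μ f z Q ≤ rMass μ Q := by
  rw [rMassZ_eq_rMass]
  exact rMass_le_rMass (fiberMeasure_le hμ f z) Q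

/-! ### Errors of protocols on rectangles -/

/-- The `μ`-mass of the inputs in `Q` on which `P` errs. -/
def errMass (μ : X → Y → ℝ) (f : X → Y → Bool) (P : Protocol X Y)
    (Q : Finset X × Finset Y) : ℝ :=
  rMass (fun x y => if P.eval x y ≠ f x y then μ x y else 0) Q

lemma commErr_eq_errMass_top (μ : X → Y → ℝ) (f : X → Y → Bool) (P : Protocol X Y) :
    commErr μ f P = errMass μ f P ⊤ :=
  (rMass_top _).symm

lemma errMass_le_rMass (hμ : ∀ x y, 0 ≤ μ x y) (f : X → Y → Bool) (P : Protocol X Y)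
    (Q : Finset X × Finset Y) : errMass μ f P Q ≤ rMass μ Q :=
  rMass_le_rMass (fun x y => ite_le_sup _ _ _ |>.trans (sup_le le_rfl (hμ x y))) Q

lemma errMass_leaf (μ : X → Y → ℝ) (f : X → Y → Bool) (z : Bool) (Q : Finset X × Finset Y) :
    errMass μ f (.leaf z) Q = rMassZ μ f (!z) Q := by
  rw [rMassZ_eq_rMass]
  refine congrArg (rMass · Q) (funext₂ fun x y => ?_)
  cases hf : f x y <;> cases z <;> simp [fiberMeasure, Protocol.eval, hf]

lemma IsSplit.exists_errMass_eq_add (hQ : IsSplit Q Q₁ Q₂) (μ : X → Y → ℝ) (f : X → Y → Bool)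
    (P₁ P₂ : Protocol X Y) :
    ∃ P : Protocol X Y, P.leavesCount = P₁.leavesCount + P₂.leavesCount ∧
      errMass μ f P Q = errMass μ f P₁ Q₁ + errMass μ f P₂ Q₂ := by
  cases hQ with
  | @alice S A B hS =>
    refine ⟨.nodeA (fun x => decide (x ∈ S)) P₂ P₁, add_comm _ _, ?_⟩
    simp only [errMass, (IsSplit.alice B hS).rMass_eq_add, rMass_eq_sum]
    congr 1 <;> refine Finset.sum_congr rfl fun x hx => ?_
    · simp only [Protocol.eval, hx, decide_true, if_true]
    · simp [Protocol.eval, (Finset.mem_sdiff.1 hx).2]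
  | @bob A T B hT =>
    refine ⟨.nodeB (fun y => decide (y ∈ T)) P₂ P₁, add_comm _ _, ?_⟩
    simp only [errMass, (IsSplit.bob A hT).rMass_eq_add, rMass_eq_sum]
    congr 1 <;> refine Finset.sum_congr rfl fun x _ => Finset.sum_congr rfl fun y hy => ?_
    · simp only [Protocol.eval, hy, decide_true, if_true]
    · simp [Protocol.eval, (Finset.mem_sdiff.1 hy).2]

/-! ### Weightings of rectangles -/

/-- The packing constraints of the linear program for `srec^z_{ε,δ}(f)`. -/
structure IsPacking (f : X → Y → Bool) (z : Bool) (δ : ℝ) (w : Finset X × Finset Y → ℝ) :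
    Prop where
  nonneg : ∀ R, 0 ≤ w R
  rcov_le_one : ∀ x y, rcov w x y ≤ 1
  rcov_le_of_ne : ∀ x y, f x y ≠ z → rcov w x y ≤ δ

lemma rcov_mono (hvw : ∀ R, v R ≤ w R) (x : X) (y : Y) : rcov v x y ≤ rcov w x y := by
  refine Finset.sum_le_sum fun R _ => ?_
  split_ifs
  exacts [hvw R, le_rfl]

lemma rcov_nonneg (hw : ∀ R, 0 ≤ w R) (x : X) (y : Y) : 0 ≤ rcov w x y :=
  Finset.sum_nonneg fun R _ => ite_nonneg (hw R) le_rfl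

lemma rcov_le_sum (hw : ∀ R, 0 ≤ w R) (x : X) (y : Y) : rcov w x y ≤ ∑ R, w R :=
  Finset.sum_le_sum fun R _ => ite_le_sup _ _ _ |>.trans (sup_le le_rfl (hw R))

lemma rcov_add (u v : Finset X × Finset Y → ℝ) (x : X) (y : Y) :
    rcov (u + v) x y = rcov u x y + rcov v x y := by
  simp only [rcov, Pi.add_apply, ← Finset.sum_add_distrib, ite_add_zero]

lemma IsPacking.mono {δ : ℝ} (hw : IsPacking f z δ w) (hv : ∀ R, 0 ≤ v R)
    (hvw : ∀ R, v R ≤ w R) : IsPacking f z δ v where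
  nonneg := hv
  rcov_le_one x y := (rcov_mono hvw x y).trans (hw.rcov_le_one x y)
  rcov_le_of_ne x y hxy := (rcov_mono hvw x y).trans (hw.rcov_le_of_ne x y hxy)

/-- The `μ`-mass of `Q`, counted with the multiplicity with which `w` covers each input. -/
def coverage (μ : X → Y → ℝ) (w : Finset X × Finset Y → ℝ) (Q : Finset X × Finset Y) : ℝ :=
  rMass (fun x y => μ x y * rcov w x y) Q

/-- The `μ`-mass of the inputs in `Q` with `f`-value `z`, counted with the fraction that `w`
leaves uncovered. -/
def deficit (μ : X → Y → ℝ) (f : X → Y → Bool) (z : Bool) (w : Finset X × Finset Y → ℝ)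
    (Q : Finset X × Finset Y) : ℝ :=
  rMass (fun x y => fiberMeasure μ f z x y * (1 - rcov w x y)) Q

lemma coverage_eq_sum (μ : X → Y → ℝ) (w : Finset X × Finset Y → ℝ) (Q : Finset X × Finset Y) :
    coverage μ w Q = ∑ R, w R * rMass μ (Q ⊓ R) := by
  have hR : ∀ R : Finset X × Finset Y, w R * rMass μ (Q ⊓ R) =
      rMass (fun x y => if x ∈ R.1 ∧ y ∈ R.2 then μ x y * w R else 0) Q := by
    intro R
    simp only [rMass, Finset.mul_sum]
    refine Finset.sum_congr rfl fun x _ => Finset.sum_congr rfl fun y _ => ?_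
    simp only [Prod.fst_inf, Prod.snd_inf, Finset.inf_eq_inter, Finset.mem_inter]
    split_ifs <;> first | ring1 | tauto
  calc coverage μ w Q = ∑ x ∈ Q.1, ∑ R : Finset X × Finset Y, ∑ y ∈ Q.2,
        if x ∈ R.1 ∧ y ∈ R.2 then μ x y * w R else 0 := by
        simp only [coverage, rMass_eq_sum, rcov, Finset.mul_sum, mul_ite, mul_zero]
        exact Finset.sum_congr rfl fun x _ => Finset.sum_comm
    _ = ∑ R, w R * rMass μ (Q ⊓ R) := by
        simp_rw [hR, rMass_eq_sum _ Q]
        exact Finset.sum_comm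

lemma coverage_add (g h : X → Y → ℝ) (w : Finset X × Finset Y → ℝ) (Q : Finset X × Finset Y) :
    coverage (fun x y => g x y + h x y) w Q = coverage g w Q + coverage h w Q := by
  simp only [coverage, add_mul, rMass_add]

lemma coverage_le_mul_rMass {c : ℝ} (hg : ∀ x y, 0 ≤ g x y)
    (hw : ∀ x y, g x y ≠ 0 → rcov w x y ≤ c) (Q : Finset X × Finset Y) :
    coverage g w Q ≤ c * rMass g Q := by
  rw [← rMass_const_mul]
  refine rMass_le_rMass (fun x y => ?_) Q
  rcases eq_or_ne (g x y) 0 with hxy | hxy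
  · simp only [hxy, zero_mul, mul_zero, le_refl]
  · rw [mul_comm]
    exact mul_le_mul_of_nonneg_right (hw x y hxy) (hg x y)

lemma coverage_le_rMass (hμ : ∀ x y, 0 ≤ μ x y) (hw : ∀ x y, rcov w x y ≤ 1)
    (Q : Finset X × Finset Y) : coverage μ w Q ≤ rMass μ Q :=
  (coverage_le_mul_rMass hμ (fun x y _ => hw x y) Q).trans (one_mul _).le

lemma IsPacking.coverage_fiberMeasure_not_le {δ : ℝ} (hw : IsPacking f z δ w)
    (hμ : ∀ x y, 0 ≤ μ x y) (Q : Finset X × Finset Y) :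
    coverage (fiberMeasure μ f (!z)) w Q ≤ δ * rMassZ μ f (!z) Q := by
  rw [rMassZ_eq_rMass]
  refine coverage_le_mul_rMass (fiberMeasure_nonneg hμ f _) (fun x y hxy => ?_) Q
  refine hw.rcov_le_of_ne x y fun hf => hxy ?_
  simp [fiberMeasure, hf]

lemma deficit_nonneg (hμ : ∀ x y, 0 ≤ μ x y) (f : X → Y → Bool) (z : Bool)
    (hw : ∀ x y, rcov w x y ≤ 1) (Q : Finset X × Finset Y) : 0 ≤ deficit μ f z w Q :=
  rMass_nonneg
    (fun x y => mul_nonneg (fiberMeasure_nonneg hμ f z x y) (sub_nonneg.2 (hw x y))) Q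

lemma deficit_add_coverage (μ : X → Y → ℝ) (f : X → Y → Bool) (z : Bool)
    (w : Finset X × Finset Y → ℝ) (Q : Finset X × Finset Y) :
    deficit μ f z w Q + coverage (fiberMeasure μ f z) w Q = rMassZ μ f z Q := by
  simp only [deficit, coverage, ← rMass_add, rMassZ_eq_rMass]
  ring_nf

lemma deficit_le_deficit_add_coverage (hμ : ∀ x y, 0 ≤ μ x y) (f : X → Y → Bool) (z : Bool)
    (hv : ∀ R, 0 ≤ v R) (u : Finset X × Finset Y → ℝ) (Q : Finset X × Finset Y) :
    deficit μ f z u Q ≤ deficit μ f z (u + v) Q + coverage μ v Q := by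
  simp only [deficit, coverage, ← rMass_add, rcov_add]
  refine rMass_le_rMass (fun x y => ?_) Q
  have := mul_le_mul_of_nonneg_right (fiberMeasure_le hμ f z x y) (rcov_nonneg hv x y)
  linarith

lemma rMassZ_le_two_mul_deficit (hμ : ∀ x y, 0 ≤ μ x y) (f : X → Y → Bool) (z : Bool)
    (hw : ∀ R, 0 ≤ w R) (hw' : 2 * ∑ R, w R ≤ 1) (Q : Finset X × Finset Y) :
    rMassZ μ f z Q ≤ 2 * deficit μ f z w Q := by
  have hcov : coverage (fiberMeasure μ f z) w Q ≤ 1 / 2 * rMassZ μ f z Q := by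
    rw [rMassZ_eq_rMass]
    refine coverage_le_mul_rMass (fiberMeasure_nonneg hμ f z) (fun x y _ => ?_) Q
    linarith [rcov_le_sum hw x y]
  linarith [deficit_add_coverage μ f z w Q]

/-! ### Halving a weighting -/

/-- Averaging over `w` finds a rectangle for which `μ₁(Q) / (4W) + τ μ₀(Q ⊓ R) / (4δ)` is below
`μ₁(Q ⊓ R)`, where `μ_z` denotes `rMassZ μ f z`. -/
lemma IsPacking.exists_biased_inf {δ W τ : ℝ} (hw : IsPacking f true δ w)
    (hμ : ∀ x y, 0 ≤ μ x y) (hwW : ∑ R, w R ≤ W) (hW : 0 < W) (hδ : 0 < δ) (hτ : 0 ≤ τ)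
    (hlarge : τ * rMass μ Q < rMassZ μ f true Q)
    (hdef : 2 * deficit μ f true w Q < rMassZ μ f true Q) :
    ∃ R : Finset X × Finset Y, 0 < rMassZ μ f true (Q ⊓ R) ∧
      rMassZ μ f true Q ≤ 4 * W * rMassZ μ f true (Q ⊓ R) ∧
      τ * rMassZ μ f false (Q ⊓ R) ≤ 4 * δ * rMassZ μ f true (Q ⊓ R) := by
  have hM : 0 < rMassZ μ f true Q := (mul_nonneg hτ (rMass_nonneg hμ Q)).trans_lt hlarge
  have hcov₁ := deficit_add_coverage μ f true w Q
  have hcov₀ : coverage (fiberMeasure μ f false) w Q ≤ δ * rMass μ Q :=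
    (hw.coverage_fiberMeasure_not_le hμ Q).trans
      (mul_le_mul_of_nonneg_left (rMassZ_le_rMass hμ f false Q) hδ.le)
  have hsum : ∑ R, w R * (δ * rMassZ μ f true Q + τ * W * rMassZ μ f false (Q ⊓ R)) <
      ∑ R, w R * (4 * W * δ * rMassZ μ f true (Q ⊓ R)) := by
    calc _ = (∑ R, w R) * (δ * rMassZ μ f true Q) +
          τ * W * coverage (fiberMeasure μ f false) w Q := by
          simp only [coverage_eq_sum, rMassZ_eq_rMass, Finset.sum_mul, Finset.mul_sum,
            ← Finset.sum_add_distrib]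
          exact Finset.sum_congr rfl fun R _ => by ring
      _ ≤ W * (δ * rMassZ μ f true Q) + τ * W * (δ * rMass μ Q) := by gcongr
      _ = W * δ * (rMassZ μ f true Q + τ * rMass μ Q) := by ring
      _ < W * δ * (4 * coverage (fiberMeasure μ f true) w Q) := by gcongr; linarith
      _ = _ := by
          simp only [coverage_eq_sum, rMassZ_eq_rMass, Finset.mul_sum]
          exact Finset.sum_congr rfl fun R _ => by ring
  obtain ⟨R, -, hR⟩ := Finset.exists_lt_of_sum_lt hsum
  replace hR := lt_of_mul_lt_mul_left hR (hw.nonneg R)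
  have hZ₀ : 0 ≤ τ * W * rMassZ μ f false (Q ⊓ R) :=
    mul_nonneg (mul_nonneg hτ hW.le) (rMassZ_nonneg hμ f false _)
  have hZ₁ : rMassZ μ f true Q ≤ 4 * W * rMassZ μ f true (Q ⊓ R) :=
    le_of_mul_le_mul_left (by linarith) hδ
  refine ⟨R, pos_of_mul_pos_right (hM.trans_le hZ₁) (by positivity), hZ₁, ?_⟩
  exact le_of_mul_le_mul_left (by linarith [mul_pos hδ hM]) hW

lemma IsPacking.coverage_le_of_biased {δ τ : ℝ} (hv : IsPacking f false δ v)
    (hμ : ∀ x y, 0 ≤ μ x y) (hδ : 0 ≤ δ) (hτ : 0 ≤ τ) (hτ₁ : τ ≤ 1)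
    (hbias : τ * rMassZ μ f false Q ≤ 4 * δ * rMassZ μ f true Q) :
    τ * coverage μ v Q ≤ 5 * δ * rMass μ Q := by
  have hcov : coverage μ v Q =
      coverage (fiberMeasure μ f true) v Q + coverage (fiberMeasure μ f false) v Q := by
    rw [← coverage_add]
    simp only [fiberMeasure_true_add_false]
  have hcov₁ : coverage (fiberMeasure μ f true) v Q ≤ δ * rMassZ μ f true Q :=
    hv.coverage_fiberMeasure_not_le hμ Q
  have hcov₀ : coverage (fiberMeasure μ f false) v Q ≤ rMassZ μ f false Q := by
    rw [rMassZ_eq_rMass]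
    exact coverage_le_rMass (fiberMeasure_nonneg hμ f _) hv.rcov_le_one Q
  have hZ := mul_nonneg hδ (rMassZ_nonneg hμ f true Q)
  calc τ * coverage μ v Q ≤ τ * (δ * rMassZ μ f true Q) + τ * rMassZ μ f false Q := by
        rw [hcov, ← mul_add]; gcongr
    _ ≤ δ * rMassZ μ f true Q + 4 * δ * rMassZ μ f true Q :=
        add_le_add (mul_le_of_le_one_left hZ hτ₁) hbias
    _ = 5 * δ * rMassZ μ f true Q := by ring
    _ ≤ 5 * δ * rMass μ Q := by gcongr; exact rMassZ_le_rMass hμ f true Q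

lemma mul_coverage_le_mul_coverage {s t : ℝ}
    (h : ∀ R, u R * (s * rMass μ (Q₁ ⊓ R)) ≤ v R * (t * rMass μ (Q₂ ⊓ R))) :
    s * coverage μ u Q₁ ≤ t * coverage μ v Q₂ := by
  simp only [coverage_eq_sum, Finset.mul_sum]
  refine Finset.sum_le_sum fun R _ => ?_
  linarith [h R]

/-- For a product measure, whether `T` takes up a fraction `κ μ(T) / μ(B)` of the trace of `R` on
`C × B` does not depend on `C`. -/
lemma IsProductMeasure.exists_rMass_inf_le_or_le {S : Finset X} {B T : Finset Y}
    (hμ : IsProductMeasure μ) (κ : ℝ) (hT : T ⊆ B) (hpos : 0 < rMass μ (S, T)) :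
    ∃ b t : ℝ, 0 < b ∧ 0 < t ∧ (∀ C, b * rMass μ (C, T) = t * rMass μ (C, B)) ∧
      ∀ R, (∀ C, κ * t * rMass μ ((C, B) ⊓ R) ≤ b * rMass μ ((C, T) ⊓ R)) ∨
        ∀ C, b * rMass μ ((C, T) ⊓ R) ≤ κ * t * rMass μ ((C, B) ⊓ R) := by
  obtain ⟨μA, μB, hA, hB, rfl⟩ := hμ
  simp only [rMass_mul, Prod.fst_inf, Prod.snd_inf, Finset.inf_eq_inter] at hpos ⊢
  have hA' : ∀ C : Finset X, 0 ≤ ∑ x ∈ C, μA x := fun C => Finset.sum_nonneg fun x _ => hA x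
  have ht : 0 < ∑ y ∈ T, μB y := pos_of_mul_pos_right hpos (hA' S)
  refine ⟨∑ y ∈ B, μB y, ∑ y ∈ T, μB y,
    ht.trans_le (Finset.sum_le_sum_of_subset_of_nonneg hT fun y _ _ => hB y), ht,
    fun C => by ring, fun R => ?_⟩
  refine (le_total (κ * (∑ y ∈ T, μB y) * ∑ y ∈ B ∩ R.2, μB y)
    ((∑ y ∈ B, μB y) * ∑ y ∈ T ∩ R.2, μB y)).imp (fun hR C => ?_) fun hR C => ?_ <;>
  linarith [mul_le_mul_of_nonneg_left hR (hA' (C ∩ R.1))]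

lemma exists_add_eq_coverage_le {κ : ℝ} {A S : Finset X} {B T : Finset Y}
    (hμ : IsProductMeasure μ) (hv : ∀ R, 0 ≤ v R) (hκ : 0 < κ) (hT : T ⊆ B)
    (hpos : 0 < rMass μ (S, T)) (hST : coverage μ v (S, T) ≤ κ ^ 2 * rMass μ (S, T))
    (hAB : coverage μ v (A, B) ≤ rMass μ (A, B)) :
    ∃ p q : Finset X × Finset Y → ℝ, (∀ R, 0 ≤ p R) ∧ (∀ R, 0 ≤ q R) ∧ p + q = v ∧
      coverage μ p (S, B) ≤ κ * rMass μ (S, B) ∧ coverage μ q (A, T) ≤ κ * rMass μ (A, T) := by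
  obtain ⟨b, t, hb, ht, hbt, htrace⟩ := hμ.exists_rMass_inf_le_or_le κ hT hpos
  let heavy : Set (Finset X × Finset Y) :=
    {R | ∀ C, κ * t * rMass μ ((C, B) ⊓ R) ≤ b * rMass μ ((C, T) ⊓ R)}
  refine ⟨heavy.indicator v, heavyᶜ.indicator v, Set.indicator_nonneg fun R _ => hv R,
    Set.indicator_nonneg fun R _ => hv R, Set.indicator_self_add_compl heavy v, ?_, ?_⟩
  · have hheavy : κ * t * coverage μ (heavy.indicator v) (S, B) ≤ b * coverage μ v (S, T) := by
      refine mul_coverage_le_mul_coverage fun R => ?_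
      by_cases hR : R ∈ heavy
      · rw [Set.indicator_of_mem hR]
        exact mul_le_mul_of_nonneg_left (hR S) (hv R)
      · rw [Set.indicator_of_notMem hR, zero_mul]
        exact mul_nonneg (hv R) (mul_nonneg hb.le (rMass_nonneg hμ.nonneg _))
    refine le_of_mul_le_mul_left ?_ (mul_pos hκ ht)
    calc _ ≤ b * (κ ^ 2 * rMass μ (S, T)) := hheavy.trans (by gcongr)
      _ = κ ^ 2 * (b * rMass μ (S, T)) := by ring
      _ = κ * t * (κ * rMass μ (S, B)) := by rw [hbt]; ring
  · have hlight : b * coverage μ (heavyᶜ.indicator v) (A, T) ≤ κ * t * coverage μ v (A, B) := by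
      refine mul_coverage_le_mul_coverage fun R => ?_
      by_cases hR : R ∈ heavy
      · rw [Set.indicator_of_notMem (not_not.2 hR), zero_mul]
        exact mul_nonneg (hv R) (mul_nonneg (by positivity) (rMass_nonneg hμ.nonneg _))
      · rw [Set.indicator_of_mem hR]
        exact mul_le_mul_of_nonneg_left ((htrace R).resolve_left hR A) (hv R)
    refine le_of_mul_le_mul_left ?_ hb
    calc _ ≤ κ * t * rMass μ (A, B) := hlight.trans (by gcongr)
      _ = b * (κ * rMass μ (A, T)) := by rw [mul_assoc, ← hbt]; ring

lemma exists_halving_split {δ τ κ : ℝ} (hμ : IsProductMeasure μ) (hv : IsPacking f false δ v)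
    (hδ : 0 ≤ δ) (hτ : 0 < τ) (hτ₁ : τ ≤ 1) (hκ : 0 < κ) (hδκ : 5 * δ ≤ τ * κ ^ 2)
    (hQ : Q₁ ≤ Q) (hpos : 0 < rMass μ Q₁)
    (hbias : τ * rMassZ μ f false Q₁ ≤ 4 * δ * rMassZ μ f true Q₁) :
    ∃ v' R₁ R₂, IsPacking f false δ v' ∧ 2 * ∑ R, v' R ≤ ∑ R, v R ∧ IsSplit Q R₁ R₂ ∧ Q₁ ≤ R₁ ∧
      deficit μ f false v' R₁ ≤ deficit μ f false v R₁ + κ * rMass μ R₁ := by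
  obtain ⟨S, T⟩ := Q₁
  obtain ⟨A, B⟩ := Q
  have hcov : coverage μ v (S, T) ≤ κ ^ 2 * rMass μ (S, T) := by
    refine le_of_mul_le_mul_left ?_ hτ
    linarith [hv.coverage_le_of_biased hμ.nonneg hδ hτ.le hτ₁ hbias,
      mul_le_mul_of_nonneg_right hδκ hpos.le]
  obtain ⟨p, q, hp, hq, hpq, hpS, hqT⟩ := exists_add_eq_coverage_le hμ hv.nonneg hκ hQ.2 hpos hcov
    (coverage_le_rMass hμ.nonneg hv.rcov_le_one (A, B))
  have hkeep : ∀ u u' : Finset X × Finset Y → ℝ, (∀ R, 0 ≤ u R) → (∀ R, 0 ≤ u' R) → u + u' = v →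
      ∑ R, u R ≤ ∑ R, u' R → IsPacking f false δ u ∧ 2 * ∑ R, u R ≤ ∑ R, v R := by
    rintro u u' hu hu' rfl hle
    refine ⟨hv.mono hu fun R => le_add_of_nonneg_right (hu' R), ?_⟩
    simp only [Pi.add_apply, Finset.sum_add_distrib]
    linarith
  rcases le_total (∑ R, p R) (∑ R, q R) with hle | hle
  · obtain ⟨hp', hsum⟩ := hkeep p q hp hq hpq hle
    refine ⟨p, (A, T), (A, B \ T), hp', hsum, .bob A hQ.2, ⟨hQ.1, le_rfl⟩, ?_⟩
    rw [← hpq]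
    exact (deficit_le_deficit_add_coverage hμ.nonneg f false hq p _).trans (by gcongr)
  · obtain ⟨hq', hsum⟩ := hkeep q p hq hp (add_comm q p ▸ hpq) hle
    refine ⟨q, (S, B), (A \ S, B), hq', hsum, .alice B hQ.1, ⟨le_rfl, hQ.2⟩, ?_⟩
    rw [← hpq, add_comm p q]
    exact (deficit_le_deficit_add_coverage hμ.nonneg f false hp q _).trans (by gcongr)

lemma errMass_leaf_le_or_exists_split {δ τ κ W : ℝ} (hμ : IsProductMeasure μ)
    (hw : IsPacking f true δ w) (hwW : ∑ R, w R ≤ W) (hW : 0 < W) (hv : IsPacking f false δ v)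
    (hδ : 0 < δ) (hτ : 0 < τ) (hτ₁ : τ ≤ 1) (hκ : 0 < κ) (hδκ : 5 * δ ≤ τ * κ ^ 2)
    (Q : Finset X × Finset Y) :
    errMass μ f (.leaf false) Q ≤ 2 * deficit μ f true w Q + τ * rMass μ Q ∨
    ∃ v' Q₁ Q₂, IsPacking f false δ v' ∧ 2 * ∑ R, v' R ≤ ∑ R, v R ∧ IsSplit Q Q₁ Q₂ ∧
      deficit μ f false v' Q₁ ≤ deficit μ f false v Q₁ + κ * rMass μ Q₁ ∧
      rMass μ Q₂ ≤ (1 - τ / (4 * W)) * rMass μ Q := by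
  have hdef := deficit_nonneg hμ.nonneg f true hw.rcov_le_one Q
  have hM := mul_nonneg hτ.le (rMass_nonneg hμ.nonneg Q)
  rw [errMass_leaf, Bool.not_false]
  rcases le_or_gt (rMassZ μ f true Q) (τ * rMass μ Q) with hsmall | hlarge
  · exact .inl (by linarith)
  rcases le_or_gt (rMassZ μ f true Q) (2 * deficit μ f true w Q) with hsmall | hlarge'
  · exact .inl (by linarith)
  obtain ⟨R, hpos, hR, hbias⟩ :=
    hw.exists_biased_inf hμ.nonneg hwW hW hδ hτ.le hlarge hlarge'
  obtain ⟨v', Q₁, Q₂, hv', hsum, hsplit, hle, hdef'⟩ := exists_halving_split hμ hv hδ.le hτ hτ₁ hκ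
    hδκ inf_le_left (hpos.trans_le (rMassZ_le_rMass hμ.nonneg f true _)) hbias
  refine .inr ⟨v', Q₁, Q₂, hv', hsum, hsplit, hdef', ?_⟩
  have hQ₁ : τ / (4 * W) * rMass μ Q ≤ rMass μ Q₁ := by
    rw [div_mul_eq_mul_div, div_le_iff₀ (by positivity), mul_comm (rMass μ Q₁)]
    calc τ * rMass μ Q ≤ 4 * W * rMassZ μ f true (Q ⊓ R) := hlarge.le.trans hR
      _ ≤ 4 * W * rMass μ Q₁ := by
        gcongr
        exact (rMassZ_le_rMass hμ.nonneg f true _).trans (rMass_mono hμ.nonneg hle)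
  linarith [hsplit.rMass_eq_add μ]

/-- Some protocol with at most `L` leaves errs on `Q` by at most twice the mass that the coverings
`w` of `f⁻¹(1)` and `v` of `f⁻¹(0)` miss, plus a fraction `a` of the mass of `Q`. -/
def HasProtocol (μ : X → Y → ℝ) (f : X → Y → Bool) (w v : Finset X × Finset Y → ℝ) (L : ℕ) (a : ℝ)
    (Q : Finset X × Finset Y) : Prop :=
  ∃ P : Protocol X Y, P.leavesCount ≤ L ∧
    errMass μ f P Q ≤ 2 * deficit μ f true w Q + 2 * deficit μ f false v Q + a * rMass μ Q

lemma HasProtocol.of_isSplit {κ a b θ : ℝ} {L₁ L₂ : ℕ} (hQ : IsSplit Q Q₁ Q₂)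
    (h₁ : HasProtocol μ f w u L₁ a Q₁) (h₂ : HasProtocol μ f w v L₂ (a + 2 * κ + b) Q₂)
    (hdef : deficit μ f false u Q₁ ≤ deficit μ f false v Q₁ + κ * rMass μ Q₁)
    (hb : 0 ≤ b) (hQ₂ : rMass μ Q₂ ≤ θ * rMass μ Q) :
    HasProtocol μ f w v (L₁ + L₂) (a + 2 * κ + b * θ) Q := by
  obtain ⟨P₁, hl₁, he₁⟩ := h₁
  obtain ⟨P₂, hl₂, he₂⟩ := h₂
  obtain ⟨P, hl, he⟩ := hQ.exists_errMass_eq_add μ f P₁ P₂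
  refine ⟨P, hl ▸ add_le_add hl₁ hl₂, ?_⟩
  have hdef₁ : deficit μ f true w Q = deficit μ f true w Q₁ + deficit μ f true w Q₂ :=
    hQ.rMass_eq_add _
  have hdef₀ : deficit μ f false v Q = deficit μ f false v Q₁ + deficit μ f false v Q₂ :=
    hQ.rMass_eq_add _
  rw [he, hdef₁, hdef₀]
  linarith [mul_le_mul_of_nonneg_left hQ₂ hb, congrArg ((a + 2 * κ) * ·) (hQ.rMass_eq_add μ)]

/-- Each of at most `j` successive splits leaves at most a fraction `1 - τ / (4W)` of the mass
on the side where the weight of `v` has not been halved; what is left in the end is given up. -/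
lemma hasProtocol_of_halves {δ τ κ W a : ℝ} {L : ℕ} (hμ : IsProductMeasure μ)
    (hw : IsPacking f true δ w) (hwW : ∑ R, w R ≤ W) (hW : 1 ≤ W) (hv : IsPacking f false δ v)
    (hδ : 0 < δ) (hτ : 0 < τ) (hτ₁ : τ ≤ 1) (hκ : 0 < κ) (hδκ : 5 * δ ≤ τ * κ ^ 2) (hτa : τ ≤ a)
    (hL : ∀ v' Q, IsPacking f false δ v' → 2 * ∑ R, v' R ≤ ∑ R, v R → HasProtocol μ f w v' L a Q)
    (j : ℕ) (Q : Finset X × Finset Y) :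
    HasProtocol μ f w v (j * L + 1) (a + 2 * κ + (1 - τ / (4 * W)) ^ j) Q := by
  have hθ : 0 ≤ 1 - τ / (4 * W) := by
    rw [sub_nonneg, div_le_one (by positivity)]; linarith
  have hdef₁ := deficit_nonneg hμ.nonneg f true hw.rcov_le_one
  have hdef₀ := deficit_nonneg hμ.nonneg f false hv.rcov_le_one
  have hM := rMass_nonneg hμ.nonneg
  induction j generalizing Q with
  | zero =>
    refine ⟨.leaf false, by simp [Protocol.leavesCount], ?_⟩
    have ha : 0 ≤ (a + 2 * κ) * rMass μ Q := mul_nonneg (by linarith) (hM Q)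
    linarith [errMass_le_rMass hμ.nonneg f (.leaf false) Q, hdef₁ Q, hdef₀ Q]
  | succ j ih =>
    rcases errMass_leaf_le_or_exists_split hμ hw hwW (zero_lt_one.trans_le hW) hv hδ hτ hτ₁ hκ hδκ
      Q with hleaf | ⟨v', Q₁, Q₂, hv', hhalf, hsplit, hdef, hQ₂⟩
    · refine ⟨.leaf false, Nat.le_add_left _ _, ?_⟩
      have ha : τ * rMass μ Q ≤ (a + 2 * κ + (1 - τ / (4 * W)) ^ (j + 1)) * rMass μ Q :=
        mul_le_mul_of_nonneg_right (by linarith [pow_nonneg hθ (j + 1)]) (hM Q)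
      linarith [hdef₀ Q]
    · rw [pow_succ, show (j + 1) * L + 1 = L + (j * L + 1) by ring]
      exact HasProtocol.of_isSplit hsplit (hL v' Q₁ hv' hhalf) (ih Q₂) hdef (pow_nonneg hθ j) hQ₂

lemma hasProtocol_of_sum_le {δ τ κ W : ℝ} {m : ℕ} (hμ : IsProductMeasure μ)
    (hw : IsPacking f true δ w) (hwW : ∑ R, w R ≤ W) (hW : 1 ≤ W) (hv : IsPacking f false δ v)
    (hvm : 2 * ∑ R, v R ≤ 2 ^ m) (hδ : 0 < δ) (hτ : 0 < τ) (hτ₁ : τ ≤ 1) (hκ : 0 < κ)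
    (hδκ : 5 * δ ≤ τ * κ ^ 2) (k : ℕ) (Q : Finset X × Finset Y) :
    HasProtocol μ f w v ((k + 1) ^ m) (τ + m * (2 * κ + (1 - τ / (4 * W)) ^ k)) Q := by
  have hθ : 0 ≤ 1 - τ / (4 * W) := by
    rw [sub_nonneg, div_le_one (by positivity)]; linarith
  induction m generalizing v Q with
  | zero =>
    refine ⟨.leaf true, le_rfl, ?_⟩
    rw [errMass_leaf, Bool.not_true]
    have ha : 0 ≤ (τ + (0 : ℕ) * (2 * κ + (1 - τ / (4 * W)) ^ k)) * rMass μ Q :=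
      mul_nonneg (by positivity) (rMass_nonneg hμ.nonneg Q)
    linarith [rMassZ_le_two_mul_deficit hμ.nonneg f false hv.nonneg (by simpa using hvm) Q,
      deficit_nonneg hμ.nonneg f true hw.rcov_le_one Q]
  | succ m ih =>
    rw [pow_succ] at hvm
    obtain ⟨P, hl, he⟩ := hasProtocol_of_halves hμ hw hwW hW hv hδ hτ hτ₁ hκ hδκ
      (le_add_of_nonneg_right (by positivity))
      (fun v' Q hv' hhalf => ih hv' (by linarith) Q) k Q
    refine ⟨P, hl.trans ?_, he.trans_eq ?_⟩
    · linarith [Nat.one_le_pow m (k + 1) k.succ_pos, pow_succ (k + 1) m]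
    · push_cast
      ring

/-! ### Solutions of the linear program -/

lemma exists_rcov_eq_ite (f : X → Y → Bool) (z : Bool) :
    ∃ w : Finset X × Finset Y → ℝ, (∀ R, 0 ≤ w R) ∧
      ∀ x y, rcov w x y = if f x y = z then 1 else 0 := by
  refine ⟨fun R => if ∃ x y, R = ({x}, {y}) ∧ f x y = z then 1 else 0,
    fun R => ite_nonneg zero_le_one le_rfl, fun x y => ?_⟩
  rw [rcov, Finset.sum_eq_single ({x}, {y})]
  · simp
  · rintro R - hR
    rw [ite_eq_right_iff]
    rintro ⟨hx, hy⟩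
    refine if_neg ?_
    rintro ⟨x', y', rfl, -⟩
    obtain rfl := Finset.mem_singleton.1 hx
    obtain rfl := Finset.mem_singleton.1 hy
    exact hR rfl
  · simp

lemma one_sub_mul_totalZ_le_iff {ε : ℝ} :
    (1 - ε) * totalZ μ f z ≤ (∑ x, ∑ y, if f x y = z then μ x y * rcov w x y else 0) ↔
      deficit μ f z w ⊤ ≤ ε * totalZ μ f z := by
  have hcov : (∑ x, ∑ y, if f x y = z then μ x y * rcov w x y else 0) =
      coverage (fiberMeasure μ f z) w ⊤ := by
    simp only [coverage, rMass_top, fiberMeasure, ite_mul, zero_mul]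
  have hdef := deficit_add_coverage μ f z w ⊤
  rw [hcov, totalZ_eq_rMassZ_top]
  constructor <;> intro h <;> linarith

lemma exists_isPacking_of_srecZmu_lt {ε δ V : ℝ} (hμ : IsDist2 μ) (hε : 0 ≤ ε) (hδ : 0 ≤ δ)
    (hV : srecZmu μ f z ε δ < V) :
    ∃ w, IsPacking f z δ w ∧ ∑ R, w R ≤ V ∧ deficit μ f z w ⊤ ≤ ε := by
  have htot : 0 ≤ totalZ μ f z := totalZ_eq_rMassZ_top μ f z ▸ rMassZ_nonneg hμ.1 f z ⊤
  have htot₁ : totalZ μ f z ≤ 1 := by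
    rw [totalZ_eq_rMassZ_top, ← hμ.2, ← rMass_top]
    exact rMassZ_le_rMass hμ.1 f z ⊤
  obtain ⟨w₁, hw₁, hcov₁⟩ := exists_rcov_eq_ite f z
  have hdef₁ : deficit μ f z w₁ ⊤ = 0 := by
    rw [deficit, rMass_top]
    refine Finset.sum_eq_zero fun x _ => Finset.sum_eq_zero fun y _ => ?_
    by_cases hxy : f x y = z <;> simp [fiberMeasure, hcov₁, hxy]
  obtain ⟨_, ⟨w, hw, hwtot, hwδ, hwone, rfl⟩, hwV⟩ := exists_lt_of_csInf_lt (by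
    refine ⟨_, w₁, hw₁, one_sub_mul_totalZ_le_iff.2 (hdef₁.trans_le (mul_nonneg hε htot)),
      fun x y hxy => by rwa [hcov₁, if_neg hxy], fun x y => ?_, rfl⟩
    rw [hcov₁]
    split_ifs <;> norm_num) hV
  exact ⟨w, ⟨hw, hwone, hwδ⟩, hwV.le,
    (one_sub_mul_totalZ_le_iff.1 hwtot).trans (mul_le_of_le_one_right hε htot₁)⟩

/-! ### Bounds on the distributional complexity -/

lemma CCdist_le {ε : ℝ} {d : ℕ} (P : Protocol X Y) (hd : P.depth ≤ d) (hε : commErr μ f P ≤ ε) :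
    CCdist μ f ε ≤ d :=
  Nat.sInf_le ⟨P, hd, hε⟩

lemma CCdist_le_of_card_le {ε : ℝ} {n : ℕ} (hε : 0 ≤ ε) (hX : Fintype.card X ≤ 2 ^ n) :
    CCdist μ f ε ≤ n + 1 := by
  obtain ⟨P, hd, hP⟩ := Protocol.exists_depth_le_of_card_le f (s := Finset.univ) hX
  refine CCdist_le P hd (le_of_eq_of_le ?_ hε)
  exact Finset.sum_eq_zero fun x hx => Finset.sum_eq_zero fun y _ => by simp [hP x hx y]

lemma one_sub_pow_le_inv {x t : ℝ} {k : ℕ} (hx : x ≤ 1) (ht : 0 < t) (hk : t ≤ k * x) :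
    (1 - x) ^ k ≤ t⁻¹ := by
  calc (1 - x) ^ k ≤ Real.exp (-x) ^ k :=
        pow_le_pow_left₀ (sub_nonneg.2 hx) (Real.one_sub_le_exp_neg x) k
    _ = (Real.exp (k * x))⁻¹ := by rw [← Real.exp_nat_mul, mul_neg, Real.exp_neg]
    _ ≤ t⁻¹ := inv_anti₀ ht (by linarith [Real.add_one_le_exp (k * x)])

lemma one_le_logb_two {x : ℝ} (hx : 2 ≤ x) : 1 ≤ Real.logb 2 x := by
  rwa [Real.le_logb_iff_rpow_le one_lt_two (by linarith), Real.rpow_one]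

lemma exists_nat_lt_two_pow {x : ℝ} (hx : 2 ≤ x) :
    ∃ d : ℕ, x < 2 ^ d ∧ (d : ℝ) ≤ 2 * Real.logb 2 x := by
  have hlog := one_le_logb_two hx
  refine ⟨⌊Real.logb 2 x⌋₊ + 1, ?_, ?_⟩
  · rw [← Real.rpow_natCast, ← Real.logb_lt_iff_lt_rpow one_lt_two (by linarith)]
    exact_mod_cast Nat.lt_floor_add_one _
  · push_cast
    linarith [Nat.floor_le (zero_le_one.trans hlog)]

lemma one_sub_div_pow_le {τ : ℝ} {n l : ℕ} (d : ℕ) (hn : 0 < n) (hnl : n ≤ 2 ^ l) (hτ : 0 < τ)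
    (hτ₁ : τ ≤ 1) (hτn : 4 ≤ τ * n) :
    (1 - τ / (4 * 2 ^ d)) ^ 2 ^ (d + 2 * l) ≤ (n : ℝ)⁻¹ := by
  have hnl' : (n : ℝ) ≤ 2 ^ l := by exact_mod_cast hnl
  refine one_sub_pow_le_inv ?_ (by exact_mod_cast hn) ?_
  · rw [div_le_one (by positivity)]
    linarith [one_le_pow₀ (M₀ := ℝ) one_le_two (n := d)]
  · calc (n : ℝ) ≤ n * (τ * n / 4) := le_mul_of_one_le_right n.cast_nonneg (by linarith)
      _ = n ^ 2 * τ / 4 := by ring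
      _ ≤ (2 ^ l) ^ 2 * τ / 4 := by gcongr
      _ = (2 ^ (d + 2 * l) : ℕ) * (τ / (4 * 2 ^ d)) := by
        push_cast
        field_simp
        ring

lemma error_le_two_mul {τ n d : ℝ} (hn : 1 ≤ n) (hτ : 0 < τ) (hτ₁ : τ ≤ 1) (hd : 0 ≤ d)
    (hbig : 16 * (d + 1) ≤ τ ^ 2 * n) :
    2 * (1 / n ^ 2) + 2 * (1 / n ^ 2) + (τ + (d + 1) * (2 * (5 / (τ * n)) + n⁻¹)) ≤ 2 * τ := by
  have hinv : n⁻¹ ≤ 1 / (τ * n) := by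
    rw [← one_div]
    exact one_div_le_one_div_of_le (by positivity) (mul_le_of_le_one_left (by positivity) hτ₁)
  have hsq : 1 / n ^ 2 ≤ 1 / (τ * n) :=
    one_div_le_one_div_of_le (by positivity) (by nlinarith)
  have hloss : (d + 1) * (16 * (1 / (τ * n))) ≤ τ := by
    rw [mul_one_div, mul_div_assoc', div_le_iff₀ (by positivity)]
    linarith
  have hr : 0 ≤ 1 / (τ * n) := by positivity
  rw [div_eq_mul_one_div 5]
  generalize 1 / (τ * n) = r at *
  calc _ ≤ 4 * r + (τ + (d + 1) * (11 * r)) := by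
        linarith [mul_le_mul_of_nonneg_left hinv (by linarith : 0 ≤ d + 1)]
    _ ≤ τ + (d + 1) * (16 * r) := by linarith [mul_nonneg hd hr]
    _ ≤ 2 * τ := by linarith

lemma CCdist_le_of_srecMu_lt {τ ε : ℝ} {n l d : ℕ} (hμ : IsProductMeasure μ) (hμ₁ : IsDist2 μ)
    (hn : 0 < n) (hnl : n ≤ 2 ^ l) (hK : srecMu μ f (1 / (n : ℝ) ^ 2) (1 / (n : ℝ) ^ 2) < 2 ^ d)
    (hτ : 0 < τ) (hτ₁ : τ ≤ 1) (hτε : 2 * τ ≤ ε) (hbig : 16 * ((d : ℝ) + 1) ≤ τ ^ 2 * n) :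
    CCdist μ f ε ≤ 7 + 6 * ((d + 2 * l + 1) * (d + 1)) := by
  have hn₁ : (1 : ℝ) ≤ n := by exact_mod_cast hn
  have hδ : 0 < 1 / (n : ℝ) ^ 2 := by positivity
  obtain ⟨v, hv, hvK, hvdef⟩ := exists_isPacking_of_srecZmu_lt hμ₁ hδ.le hδ.le
    ((le_max_left _ _).trans_lt hK)
  obtain ⟨w, hw, hwK, hwdef⟩ := exists_isPacking_of_srecZmu_lt hμ₁ hδ.le hδ.le
    ((le_max_right _ _).trans_lt hK)
  obtain ⟨P, hl, he⟩ := hasProtocol_of_sum_le hμ hw hwK (one_le_pow₀ one_le_two) hv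
    (m := d + 1) (by rw [pow_succ]; linarith) hδ hτ hτ₁ (κ := 5 / (τ * n)) (by positivity)
    (by field_simp; linarith) (2 ^ (d + 2 * l)) ⊤
  have hleaves : P.leavesCount ≤ 2 ^ ((d + 2 * l + 1) * (d + 1)) := by
    rw [pow_mul, pow_succ 2 (d + 2 * l)]
    exact hl.trans (Nat.pow_le_pow_left (by linarith [Nat.one_le_two_pow (n := d + 2 * l)]) _)
  obtain ⟨P', hd, heval⟩ := P.exists_depth_le_of_leavesCount_le hleaves
  refine CCdist_le P' hd ?_
  rw [commErr_eq_errMass_top, errMass, heval]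
  refine he.trans (le_trans ?_ hτε)
  rw [rMass_top, hμ₁.2, mul_one, Nat.cast_add_one]
  have hpow : (1 - τ / (4 * 2 ^ d)) ^ 2 ^ (d + 2 * l) ≤ (n : ℝ)⁻¹ :=
    one_sub_div_pow_le d hn hnl hτ hτ₁ (by nlinarith)
  have hgain : ((d : ℝ) + 1) * (2 * (5 / (τ * n)) + (1 - τ / (4 * 2 ^ d)) ^ 2 ^ (d + 2 * l)) ≤
    (d + 1) * (2 * (5 / (τ * n)) + (n : ℝ)⁻¹) := by gcongr
  linarith [error_le_two_mul hn₁ hτ hτ₁ d.cast_nonneg hbig]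

lemma CCdist_le_mul_logb_sq {τ ε : ℝ} {n : ℕ} (hμ : IsProductMeasure μ) (hμ₁ : IsDist2 μ)
    (hτ : 0 < τ) (hτ₁ : τ ≤ 1) (hτε : 2 * τ ≤ ε) (hX : Fintype.card X ≤ 2 ^ n) (hn : 2 ≤ n)
    (hK : 2 ≤ srecMu μ f (1 / (n : ℝ) ^ 2) (1 / (n : ℝ) ^ 2)) :
    (CCdist μ f ε : ℝ) ≤ (48 / τ ^ 2 + 133) *
      (Real.logb 2 (srecMu μ f (1 / (n : ℝ) ^ 2) (1 / (n : ℝ) ^ 2)) ^ 2 * Real.logb 2 n) := by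
  have hn' : (2 : ℝ) ≤ n := by exact_mod_cast hn
  obtain ⟨d, hKd, hd⟩ := exists_nat_lt_two_pow hK
  obtain ⟨l, hnl, hl⟩ := exists_nat_lt_two_pow hn'
  have hD := one_le_logb_two hK
  have hℓ := one_le_logb_two hn'
  set D := Real.logb 2 (srecMu μ f (1 / (n : ℝ) ^ 2) (1 / (n : ℝ) ^ 2))
  set ℓ := Real.logb 2 n
  have hDℓ : D ≤ D ^ 2 * ℓ := by
    calc D = D * 1 * 1 := by ring
      _ ≤ D * D * ℓ := by gcongr
      _ = D ^ 2 * ℓ := by ring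
  have hc : 0 ≤ 48 / τ ^ 2 := by positivity
  rcases le_or_gt (16 * ((d : ℝ) + 1)) (τ ^ 2 * n) with hbig | hsmall
  · have hcc : (CCdist μ f ε : ℝ) ≤ 7 + 6 * ((d + 2 * l + 1) * (d + 1)) := by
      exact_mod_cast CCdist_le_of_srecMu_lt hμ hμ₁ (by omega) (by exact_mod_cast hnl.le) hKd hτ hτ₁
        hτε hbig
    have hfst : (d : ℝ) + 2 * l + 1 ≤ 7 * (D * ℓ) := by nlinarith
    have hsnd : (d : ℝ) + 1 ≤ 3 * D := by linarith
    calc (CCdist μ f ε : ℝ) ≤ 7 + 6 * (7 * (D * ℓ) * (3 * D)) := hcc.trans (by gcongr)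
      _ = 7 + 126 * (D ^ 2 * ℓ) := by ring
      _ ≤ (48 / τ ^ 2 + 133) * (D ^ 2 * ℓ) := by
        linarith [mul_nonneg hc (zero_le_one.trans (hD.trans hDℓ))]
  · have hcc : (CCdist μ f ε : ℝ) ≤ n + 1 := by
      exact_mod_cast CCdist_le_of_card_le (by linarith) hX
    have hnD : (n : ℝ) ≤ 48 / τ ^ 2 * D := by
      rw [div_mul_eq_mul_div, le_div_iff₀ (by positivity)]
      linarith
    linarith [mul_le_mul_of_nonneg_left hDℓ hc]

theorem cc_le_log_srecMu_sq_general {ε : ℝ} (hε : 0 < ε) :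
    ∃ C : ℝ, 0 < C ∧
      ∀ (X Y : Type) [Fintype X] [Fintype Y] (n : ℕ) (f : X → Y → Bool) (μA : X → ℝ) (μB : Y → ℝ),
        IsDist μA → IsDist μB → Fintype.card X ≤ 2 ^ n → 2 ≤ n →
        2 ≤ srecMu (fun x y => μA x * μB y) f (1 / (n : ℝ) ^ 2) (1 / (n : ℝ) ^ 2) →
        (CCdist (fun x y => μA x * μB y) f ε : ℝ) ≤
          C * (Real.logb 2
              (srecMu (fun x y => μA x * μB y) f (1 / (n : ℝ) ^ 2) (1 / (n : ℝ) ^ 2))) ^ 2 *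
            Real.logb 2 n := by
  obtain ⟨τ, hτ, hτ₁, hτε⟩ : ∃ τ : ℝ, 0 < τ ∧ τ ≤ 1 ∧ 2 * τ ≤ ε :=
    ⟨min ε 1 / 2, by positivity, by linarith [min_le_right ε 1], by linarith [min_le_left ε 1]⟩
  refine ⟨48 / τ ^ 2 + 133, by positivity, fun X Y _ _ n f μA μB hA hB hX hn hK => ?_⟩
  have hμ : IsProductMeasure fun x y => μA x * μB y := ⟨μA, μB, hA.1, hB.1, rfl⟩
  have hμ₁ : IsDist2 fun x y => μA x * μB y :=
    ⟨hμ.nonneg, by simp only [← Finset.mul_sum, hB.2, mul_one, hA.2]⟩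
  rw [mul_assoc]
  exact CCdist_le_mul_logb_sq hμ hμ₁ hτ hτ₁ hτε hX hn hK

end

/-- **Theorem 2.2, part 1.** There is a universal constant `C > 0` such that for every
`n ≥ 2`, every `f : {0,1}ⁿ × {0,1}ⁿ → {0,1}` and every product distribution `μ`
(with `srec^μ_{1/n²,1/n²}(f) ≥ 2`),
`CC^μ_{0.49}(f) ≤ C · (log srec^μ_{1/n²,1/n²}(f))² · log n`. -/
theorem cc_le_log_srecMu_sq :
    ∃ C : ℝ, 0 < C ∧
      ∀ (n : ℕ) (f : (Fin n → Bool) → (Fin n → Bool) → Bool)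
        (μA μB : (Fin n → Bool) → ℝ), IsDist μA → IsDist μB →
        2 ≤ n →
        2 ≤ srecMu (fun x y => μA x * μB y) f (1 / (n : ℝ) ^ 2) (1 / (n : ℝ) ^ 2) →
        (CCdist (fun x y => μA x * μB y) f 0.49 : ℝ) ≤
          C * (Real.logb 2
              (srecMu (fun x y => μA x * μB y) f (1 / (n : ℝ) ^ 2) (1 / (n : ℝ) ^ 2))) ^ 2 *
            Real.logb 2 n := by
  obtain ⟨C, hC, h⟩ := cc_le_log_srecMu_sq_general (ε := 0.49) (by norm_num)
  exact ⟨C, hC, fun n f μA μB hA hB => h _ _ n f μA μB hA hB (by simp)⟩
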